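/- (Proposition 1, limiting loss density.) Assume Λ ≠ 0 and let L̄ = Φ(Ξ/(ζ√T) − ΛY/ζ), where Y is standard normal. Then the law of L̄ is absolutely continuous with respect to Lebesgue measure on (0,1) with density f(x) = (ζ/|Λ|)·φ((ζ·Φ⁻¹(x) − Σ·Φ⁻¹(p))/|Λ|)/φ(Φ⁻¹(x)) for x ∈ (0,1), where p = Φ(Ξ/(Σ√T)). -/

import Mathlib

open MeasureTheory ProbabilityTheory Real Filter Set

/-- The density of the standard normal distribution. -/
noncomputable def stdPdf (y : ℝ) : ℝ := Real.exp (-y ^ 2 / 2) / Real.sqrt (2 * Real.pi)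

/-- The cumulative distribution function `Φ` of the standard normal distribution. -/
noncomputable def stdCdf (x : ℝ) : ℝ := ∫ y in Set.Iic x, stdPdf y

/-- The inverse `Φ⁻¹` of the standard normal cumulative distribution function: since `stdCdf`
is injective, `stdCdfInv` is the genuine inverse of `Φ` on `(0,1)`. -/
noncomputable def stdCdfInv : ℝ → ℝ := Function.invFun stdCdf

/-! With `m = Ξ/(ζ√T)` and `v = (Λ/ζ)²`, the loss is `Φ(X)` for a Gaussian `X` of mean `m` and
variance `v`. As `Φ` is a diffeomorphism of `ℝ` onto `(0,1)` with derivative `φ`, the density of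
`Φ(X)` at `x` is the density of `X` divided by `φ`, both at `Φ⁻¹(x)`. The parameter `Σ` enters only
through `Σ Φ⁻¹(p) = Ξ/√T`. -/

section ChangeOfVariables

variable {E : Type*} [NormedAddCommGroup E] [NormedSpace ℝ E]

theorem hasDerivAt_integral_Iic [CompleteSpace E] {f : ℝ → E} {x : ℝ} (hf : Integrable f)
    (hx : ContinuousAt f x) : HasDerivAt (fun u => ∫ y in Iic u, f y) (f x) x := by
  have split_at_zero :
      (fun u => ∫ y in Iic u, f y) = fun u => (∫ y in Iic 0, f y) + ∫ y in (0 : ℝ)..u, f y := by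
    funext u
    rw [← intervalIntegral.integral_Iic_sub_Iic hf.integrableOn hf.integrableOn,
      add_sub_cancel]
  rw [split_at_zero]
  exact (intervalIntegral.integral_hasDerivAt_right hf.intervalIntegrable
    hf.aestronglyMeasurable.stronglyMeasurableAtFilter hx).const_add _

theorem setIntegral_preimage_eq_of_hasDerivAt {f f' finv : ℝ → ℝ} {s : Set ℝ}
    (hf : ∀ u, HasDerivAt f (f' u) u) (hf' : ∀ u, f' u ≠ 0)
    (hinv : Function.LeftInverse finv f) (hs : MeasurableSet s) (hs_range : s ⊆ range f)
    (g : ℝ → E) : ∫ u in f ⁻¹' s, g u = ∫ x in s, |f' (finv x)|⁻¹ • g (finv x) := by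
  have hf_cont : Continuous f := continuous_iff_continuousAt.2 fun u => (hf u).continuousAt
  have hf_preimage : MeasurableSet (f ⁻¹' s) := hf_cont.measurable hs
  conv_rhs => rw [← image_preimage_eq_of_subset hs_range]
  rw [integral_image_eq_integral_abs_deriv_smul hf_preimage
    (fun u _ => (hf u).hasDerivWithinAt) hinv.injective.injOn]
  refine setIntegral_congr_fun hf_preimage fun u _ => ?_
  simp only [hinv u, smul_inv_smul₀ (abs_ne_zero.2 (hf' u))]

end ChangeOfVariables

theorem stdPdf_eq_gaussianPDFReal : stdPdf = gaussianPDFReal 0 1 := by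
  funext y
  simp only [stdPdf, gaussianPDFReal, NNReal.coe_one, mul_one, sub_zero]
  rw [div_eq_inv_mul]

theorem stdPdf_pos (y : ℝ) : 0 < stdPdf y := by
  unfold stdPdf
  positivity

theorem continuous_stdPdf : Continuous stdPdf := by
  unfold stdPdf
  fun_prop

theorem integrable_stdPdf : Integrable stdPdf :=
  stdPdf_eq_gaussianPDFReal ▸ integrable_gaussianPDFReal 0 1

theorem gaussianPDFReal_eq_stdPdf_div_sqrt (m : ℝ) {v : NNReal} (hv : v ≠ 0) (x : ℝ) :
    gaussianPDFReal m v x = stdPdf ((x - m) / √v) / √v := by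
  have hsqrt : 0 < √(v : ℝ) := Real.sqrt_pos.2 (by positivity)
  have hvar : NNReal.mk (√(v : ℝ) ^ 2) (sq_nonneg _) * 1 = v := by
    ext
    simp only [mul_one, NNReal.coe_mk, Real.sq_sqrt v.coe_nonneg]
  rw [stdPdf_eq_gaussianPDFReal, div_eq_inv_mul (x - m), gaussianPDFReal_inv_mul hsqrt.ne', hvar,
    gaussianPDFReal_sub, mul_zero, zero_add, abs_of_pos hsqrt, mul_div_cancel_left₀ _ hsqrt.ne']

theorem hasDerivAt_stdCdf (x : ℝ) : HasDerivAt stdCdf (stdPdf x) x :=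
  hasDerivAt_integral_Iic integrable_stdPdf continuous_stdPdf.continuousAt

theorem continuous_stdCdf : Continuous stdCdf :=
  continuous_iff_continuousAt.2 fun x => (hasDerivAt_stdCdf x).continuousAt

theorem strictMono_stdCdf : StrictMono stdCdf :=
  strictMono_of_hasDerivAt_pos hasDerivAt_stdCdf stdPdf_pos

theorem leftInverse_stdCdfInv_stdCdf : Function.LeftInverse stdCdfInv stdCdf :=
  Function.leftInverse_invFun strictMono_stdCdf.injective

theorem stdCdf_eq_cdf : stdCdf = cdf (gaussianReal 0 1) := by
  funext x
  rw [cdf_eq_real, measureReal_def, gaussianReal_apply_eq_integral 0 one_ne_zero,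
    ENNReal.toReal_ofReal (integral_nonneg fun y => gaussianPDFReal_nonneg 0 1 y),
    ← stdPdf_eq_gaussianPDFReal, stdCdf]

theorem Ioo_zero_one_subset_range_stdCdf : Ioo 0 1 ⊆ range stdCdf := by
  have tendsto_zero : Tendsto stdCdf atBot (nhds 0) := stdCdf_eq_cdf ▸ tendsto_cdf_atBot _
  have tendsto_one : Tendsto stdCdf atTop (nhds 1) := stdCdf_eq_cdf ▸ tendsto_cdf_atTop _
  rw [← image_univ]
  exact isPreconnected_univ.intermediate_value_Ioo (by simp) (by simp)
    continuous_stdCdf.continuousOn tendsto_zero tendsto_one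

theorem gaussianReal_preimage_stdCdf (m : ℝ) {v : NNReal} (hv : v ≠ 0) {s : Set ℝ}
    (hs : MeasurableSet s) (hs_unit : s ⊆ Ioo 0 1) :
    gaussianReal m v (stdCdf ⁻¹' s) = ENNReal.ofReal
      (∫ x in s, stdPdf ((stdCdfInv x - m) / √v) / √v / stdPdf (stdCdfInv x)) := by
  rw [gaussianReal_apply_eq_integral m hv,
    setIntegral_preimage_eq_of_hasDerivAt hasDerivAt_stdCdf (fun u => (stdPdf_pos u).ne')
      leftInverse_stdCdfInv_stdCdf hs (hs_unit.trans Ioo_zero_one_subset_range_stdCdf)]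
  simp only [abs_of_pos (stdPdf_pos _), gaussianPDFReal_eq_stdPdf_div_sqrt m hv, smul_eq_mul,
    ← div_eq_inv_mul]

theorem measure_preimage_stdCdf_const_sub_mul {Ω : Type*} [MeasurableSpace Ω] {P : Measure Ω}
    {Y : Ω → ℝ} (hY : HasLaw Y (gaussianReal 0 1) P) (m : ℝ) {c : ℝ} (hc : c ≠ 0) {s : Set ℝ}
    (hs : MeasurableSet s) (hs_unit : s ⊆ Ioo 0 1) :
    P ((fun ω => stdCdf (m - c * Y ω)) ⁻¹' s) = ENNReal.ofReal
      (∫ x in s, stdPdf ((stdCdfInv x - m) / |c|) / |c| / stdPdf (stdCdfInv x)) := by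
  set v : NNReal := .mk (c ^ 2) (sq_nonneg c)
  have v_ne_zero : v ≠ 0 := NNReal.coe_ne_zero.1 (pow_ne_zero 2 hc)
  have sqrt_v : √(v : ℝ) = |c| := Real.sqrt_sq_eq_abs c
  have law_X : HasLaw (fun ω => m - c * Y ω) (gaussianReal m v) P := by
    simpa only [mul_zero, sub_zero, mul_one] using
      gaussianReal_const_sub (gaussianReal_const_mul hY c) m
  calc P ((fun ω => stdCdf (m - c * Y ω)) ⁻¹' s)
      = P.map (fun ω => m - c * Y ω) (stdCdf ⁻¹' s) :=
        (Measure.map_apply_of_aemeasurable law_X.aemeasurable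
          (continuous_stdCdf.measurable hs)).symm
    _ = gaussianReal m v (stdCdf ⁻¹' s) := by rw [law_X.map_eq]
    _ = _ := by rw [gaussianReal_preimage_stdCdf m v_ne_zero hs hs_unit, sqrt_v]

/-- Proposition 1, limiting loss density: if `Λ ≠ 0`, the law of
`L̄ = Φ(Ξ/(ζ√T) − ΛY/ζ)` is absolutely continuous w.r.t. Lebesgue measure on `(0,1)` with
density `f(x) = (ζ/|Λ|) φ((ζΦ⁻¹(x) − ΣΦ⁻¹(p))/|Λ|)/φ(Φ⁻¹(x))`. -/
theorem limiting_loss_density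
    {Ω : Type*} [MeasurableSpace Ω] (P : Measure Ω) [IsProbabilityMeasure P]
    (T A B μ α σ β ρ θ : ℝ)
    (hT : 0 < T) (hA : 0 < A) (hB : 0 < B) (hσ : 0 < σ) (hβ : 0 < β)
    (hρ : ρ ∈ Set.Icc (0 : ℝ) 1) (hθ : θ ∈ Set.Icc (0 : ℝ) 1)
    (Y : Ω → ℝ) (hmY : Measurable Y)
    (hY : Measure.map Y P = gaussianReal 0 1)
    (Sg Ξ ζ Λ : ℝ)
    (hSg : Sg = Real.sqrt (σ ^ 2 + β ^ 2 - 2 * σ * β * Real.sqrt (ρ * θ)))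
    (hΞ : Ξ = Real.log (B / A) - (μ - α - (σ ^ 2 - β ^ 2) / 2) * T)
    (hζ : ζ = Real.sqrt (σ ^ 2 * (1 - ρ) + β ^ 2 * (1 - θ)))
    (hΛ : Λ = σ * Real.sqrt ρ - β * Real.sqrt θ)
    (hSgpos : 0 < Sg) (hζpos : 0 < ζ) (hΛne : Λ ≠ 0)
    (p : ℝ) (hp : p = stdCdf (Ξ / (Sg * Real.sqrt T)))
    (f : ℝ → ℝ)
    (hf : ∀ x ∈ Set.Ioo (0 : ℝ) 1,
      f x = (ζ / |Λ|) * stdPdf ((ζ * stdCdfInv x - Sg * stdCdfInv p) / |Λ|)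
              / stdPdf (stdCdfInv x)) :
    ∀ s : Set ℝ, MeasurableSet s → s ⊆ Set.Ioo (0 : ℝ) 1 →
      P ((fun ω => stdCdf (Ξ / (ζ * Real.sqrt T) - Λ * Y ω / ζ)) ⁻¹' s)
        = ENNReal.ofReal (∫ x in s, f x) := by
  intro s hs hs_unit
  have abs_ratio : |Λ / ζ| = |Λ| / ζ := by rw [abs_div, abs_of_pos hζpos]
  have Sg_mul_quantile : Sg * stdCdfInv p = Ξ / √T := by
    rw [hp, leftInverse_stdCdfInv_stdCdf]
    field_simp
  simp only [mul_div_right_comm Λ]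
  rw [measure_preimage_stdCdf_const_sub_mul ⟨hmY.aemeasurable, hY⟩ _
    (div_ne_zero hΛne hζpos.ne') hs hs_unit]
  refine congrArg ENNReal.ofReal (setIntegral_congr_fun hs fun x hx => ?_)
  have rescale :
      (stdCdfInv x - Ξ / (ζ * √T)) / (|Λ| / ζ) = (ζ * stdCdfInv x - Ξ / √T) / |Λ| := by
    field_simp
  simp only [hf x (hs_unit hx), abs_ratio, Sg_mul_quantile, rescale]
  field_simp
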